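/- Let (V,E) be any member of the SpGEMM DAG family 𝒢(A,B), let S ≥ 1 be an integer, and let {V_1,…,V_h} be an S-partition of (V,E). Then there exists a partition {𝒱_1,…,𝒱_h} of the fine-grained vertex set 𝒱 (with the same number h of parts) such that |W^A(𝒱_i)| ≤ S, |W^B(𝒱_i)| ≤ S, and |W^C(𝒱_i)| ≤ S for each i ∈ [h]. -/

import Mathlib

/-- The multiplication set `V^m`. -/
def Vm (SA SB : Set (ℕ × ℕ)) : Set (ℕ × ℕ × ℕ) :=
  {t | (t.1, t.2.1) ∈ SA ∧ (t.2.1, t.2.2) ∈ SB}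

/-- The nonzero structure `S_C` of the output matrix. -/
def SC (SA SB : Set (ℕ × ℕ)) : Set (ℕ × ℕ) :=
  {p | ∃ k, (p.1, k) ∈ SA ∧ (k, p.2) ∈ SB}

/-- A member of the SpGEMM DAG family `𝒢(A,B)`: a finite DAG whose vertices are
the pairwise distinct input vertices `v^A_{ik}` (`(i,k) ∈ S_A`) and `v^B_{kj}`
(`(k,j) ∈ S_B`), the multiplication vertices `v_{ikj}` (`(i,k,j) ∈ V^m`), and
the vertices of a summation tree `T_{ij}` for each `(i,j) ∈ S_C`; each `T_{ij}`
is a finite directed tree oriented toward a single root `root (i,j)`, whose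
leaves (zero-indegree vertices) are exactly the multiplication vertices
`v_{ikj}`, and whose non-leaf vertices are distinct from the vertices of every
other tree and from all input and multiplication vertices.  The edges are the
input edges `(v^A_{ik}, v_{ikj})` and `(v^B_{kj}, v_{ikj})` for
`(i,k,j) ∈ V^m` together with all summation-tree edges. -/
structure SpGEMMDag (SA SB : Set (ℕ × ℕ)) where
  /-- the vertex type -/
  V : Type
  /-- the DAG is finite -/
  finV : Finite V
  /-- the edge relation -/
  E : V → V → Prop
  /-- input vertices `v^A_{ik}` -/
  vA : ℕ × ℕ → V
  /-- input vertices `v^B_{kj}` -/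
  vB : ℕ × ℕ → V
  /-- multiplication vertices `v_{ikj}` -/
  vm : ℕ × ℕ × ℕ → V
  /-- vertex set of the summation tree `T_{ij}` -/
  tree : ℕ × ℕ → Set V
  /-- edge relation of the summation tree `T_{ij}` -/
  treeE : ℕ × ℕ → V → V → Prop
  /-- root of the summation tree `T_{ij}` -/
  root : ℕ × ℕ → V
  /-- the graph is acyclic -/
  acyclic : ∀ v : V, ¬ Relation.TransGen E v v
  /-- the `v^A` vertices are pairwise distinct -/
  vA_inj : Set.InjOn vA SA
  /-- the `v^B` vertices are pairwise distinct -/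
  vB_inj : Set.InjOn vB SB
  /-- the multiplication vertices are pairwise distinct -/
  vm_inj : Set.InjOn vm (Vm SA SB)
  /-- the `v^A` and `v^B` vertices are distinct -/
  vA_ne_vB : ∀ p ∈ SA, ∀ q ∈ SB, vA p ≠ vB q
  /-- input vertices `v^A` do not lie in any summation tree -/
  vA_notin_tree : ∀ p ∈ SA, ∀ q ∈ SC SA SB, vA p ∉ tree q
  /-- input vertices `v^B` do not lie in any summation tree -/
  vB_notin_tree : ∀ p ∈ SB, ∀ q ∈ SC SA SB, vB p ∉ tree q
  /-- distinct summation trees are vertex-disjoint -/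
  trees_disjoint : ∀ p ∈ SC SA SB, ∀ q ∈ SC SA SB, p ≠ q → Disjoint (tree p) (tree q)
  /-- `v_{ikj}` is a vertex of `T_{ij}` -/
  vm_mem_tree : ∀ t ∈ Vm SA SB, vm t ∈ tree (t.1, t.2.2)
  /-- `v_{ikj}` lies in no tree other than `T_{ij}` -/
  vm_mem_tree_only : ∀ t ∈ Vm SA SB, ∀ p ∈ SC SA SB, vm t ∈ tree p → p = (t.1, t.2.2)
  /-- every vertex is an input vertex or a summation-tree vertex (multiplication
  vertices are the leaves of the summation trees) -/
  vertex_cases : ∀ v : V, (∃ p ∈ SA, v = vA p) ∨ (∃ p ∈ SB, v = vB p) ∨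
      (∃ p ∈ SC SA SB, v ∈ tree p)
  /-- the root of `T_{ij}` is a vertex of `T_{ij}` -/
  root_mem : ∀ p ∈ SC SA SB, root p ∈ tree p
  /-- tree edges join vertices of their tree -/
  treeE_mem : ∀ p u v, treeE p u v → p ∈ SC SA SB ∧ u ∈ tree p ∧ v ∈ tree p
  /-- all tree edges are oriented toward the root: every non-root tree vertex
  has exactly one outgoing tree edge -/
  succ_unique : ∀ p ∈ SC SA SB, ∀ u ∈ tree p, u ≠ root p → ∃! v, treeE p u v
  /-- the root has no outgoing tree edge -/
  root_no_succ : ∀ p ∈ SC SA SB, ∀ v, ¬ treeE p (root p) v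
  /-- the zero-indegree vertices (leaves) of `T_{ij}` are exactly the
  multiplication vertices `v_{ikj}` -/
  leaves_iff : ∀ p ∈ SC SA SB, ∀ v ∈ tree p,
      ((∀ u, ¬ treeE p u v) ↔ ∃ k, (p.1, k, p.2) ∈ Vm SA SB ∧ v = vm (p.1, k, p.2))
  /-- the edge set consists exactly of the input edges and the tree edges -/
  edge_iff : ∀ u v, E u v ↔
      ((∃ t ∈ Vm SA SB, (u = vA (t.1, t.2.1) ∨ u = vB (t.2.1, t.2.2)) ∧ v = vm t) ∨
       (∃ p, treeE p u v))

/-- An input of the DAG: a vertex with no incoming edges. -/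
def SpGEMMDag.IsInput {SA SB : Set (ℕ × ℕ)} (G : SpGEMMDag SA SB) (v : G.V) : Prop :=
  ∀ u, ¬ G.E u v

/-- `D` is a dominator set of `U`: every directed path from an input to a
vertex of `U` contains a vertex of `D`. -/
def SpGEMMDag.IsDominator {SA SB : Set (ℕ × ℕ)} (G : SpGEMMDag SA SB)
    (U D : Set G.V) : Prop :=
  ∀ (a : G.V) (l : List G.V), List.Chain G.E a l → G.IsInput a →
    (a :: l).getLast (List.cons_ne_nil a l) ∈ U → ∃ d ∈ D, d ∈ a :: l

/-- The minimum set of `U`: elements of `U` with no successor in `U`. -/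
def SpGEMMDag.minSet {SA SB : Set (ℕ × ℕ)} (G : SpGEMMDag SA SB)
    (U : Set G.V) : Set G.V :=
  {u ∈ U | ∀ v, G.E u v → v ∉ U}

/-- Vertices of the fine-grained SpGEMM hypergraph. -/
inductive FGVertex : Type
  | mult (i k j : ℕ)
  | nzA (i k : ℕ)
  | nzB (k j : ℕ)
  | nzC (i j : ℕ)
deriving DecidableEq

/-- The fine-grained vertex set `𝒱`. -/
def FGV (SA SB : Set (ℕ × ℕ)) : Set FGVertex :=
  {v | (∃ t ∈ Vm SA SB, v = .mult t.1 t.2.1 t.2.2) ∨ (∃ p ∈ SA, v = .nzA p.1 p.2) ∨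
       (∃ p ∈ SB, v = .nzB p.1 p.2) ∨ (∃ p ∈ SC SA SB, v = .nzC p.1 p.2)}

/-- The net `n^A_{ik}`. -/
def netA (SB : Set (ℕ × ℕ)) (i k : ℕ) : Set FGVertex :=
  {v | (∃ j, (k, j) ∈ SB ∧ v = .mult i k j) ∨ v = .nzA i k}

/-- The net `n^B_{kj}`. -/
def netB (SA : Set (ℕ × ℕ)) (k j : ℕ) : Set FGVertex :=
  {v | (∃ i, (i, k) ∈ SA ∧ v = .mult i k j) ∨ v = .nzB k j}

/-- The net `n^C_{ij}`. -/
def netC (SA SB : Set (ℕ × ℕ)) (i j : ℕ) : Set FGVertex :=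
  {v | (∃ k, (i, k) ∈ SA ∧ (k, j) ∈ SB ∧ v = .mult i k j) ∨ v = .nzC i j}

/-- `W^A(𝒱')`: the `A`-nets meeting `𝒱'`. -/
def WA (SA SB : Set (ℕ × ℕ)) (X : Set FGVertex) : Set (ℕ × ℕ) :=
  {p ∈ SA | (netA SB p.1 p.2 ∩ X).Nonempty}

/-- `W^B(𝒱')`: the `B`-nets meeting `𝒱'`. -/
def WB (SA SB : Set (ℕ × ℕ)) (X : Set FGVertex) : Set (ℕ × ℕ) :=
  {p ∈ SB | (netB SA p.1 p.2 ∩ X).Nonempty}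

/-- `W^C(𝒱')`: the `C`-nets meeting `𝒱'`. -/
def WC (SA SB : Set (ℕ × ℕ)) (X : Set FGVertex) : Set (ℕ × ℕ) :=
  {p ∈ SC SA SB | (netC SA SB p.1 p.2 ∩ X).Nonempty}

/-- An indexed partition of the set `X` into `n` (possibly empty) parts. -/
def IsIndexedPartition {α : Type*} (X : Set α) {n : ℕ} (P : Fin n → Set α) : Prop :=
  (∀ i, P i ⊆ X) ∧ (⋃ i, P i) = X ∧ ∀ i j, i ≠ j → Disjoint (P i) (P j)

/-- An `S`-partition of the DAG `G`: a partition `{V_1,…,V_h}` of the vertices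
such that each part has a dominator set of size at most `S`, each part has
minimum set of size at most `S`, and there is no cyclic dependence among the
parts, where `V_i` depends on `V_j` if `(V_i × V_j) ∩ E ≠ ∅`. -/
def SpGEMMDag.IsSPartition {SA SB : Set (ℕ × ℕ)} (G : SpGEMMDag SA SB)
    (S : ℕ) {h : ℕ} (P : Fin h → Set G.V) : Prop :=
  ((⋃ i, P i) = Set.univ ∧ (∀ i, (P i).Nonempty) ∧
    ∀ i j, i ≠ j → Disjoint (P i) (P j)) ∧
  (∀ i, ∃ D : Set G.V, G.IsDominator (P i) D ∧ D.ncard ≤ S) ∧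
  (∀ i, (G.minSet (P i)).ncard ≤ S) ∧
  (∀ i : Fin h, ¬ Relation.TransGen
      (fun a b : Fin h => a ≠ b ∧ ∃ u ∈ P a, ∃ v ∈ P b, G.E u v) i i)

/-!
Represent each fine-grained vertex by a vertex of the DAG, `v^C_{ij}` by the root of `T_{ij}`, and
pull the `S`-partition back along this map. The net `n^A_{ik}` is then carried into the closed
out-neighborhood of the input `v^A_{ik}`, and these neighborhoods are pairwise disjoint. If one of
them meets `V_i`, then a path with at most one edge leads from `v^A_{ik}` into `V_i` inside it, so
it contains an element of every dominator set of `V_i`: a dominator set has at least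
`|W^A(𝒱_i)|` elements. The nets `n^B_{kj}` are treated in the same way. The net `n^C_{ij}` is
carried into `T_{ij}`. The summation trees are pairwise disjoint and closed under out-neighbors,
so each one that meets `V_i` contains an element of its minimum set, because the DAG is finite and
acyclic.
-/

theorem ncard_le_ncard_of_pairwiseDisjoint {ι α : Type*} {I : Set ι} {R : ι → Set α} {D : Set α}
    (hD : D.Finite) (hR : I.PairwiseDisjoint R) (hmeet : ∀ p ∈ I, (D ∩ R p).Nonempty) :
    I.ncard ≤ D.ncard := by
  rcases I.eq_empty_or_nonempty with rfl | ⟨p₀, hp₀⟩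
  · simp
  have : Nonempty α := (hmeet p₀ hp₀).nonempty
  choose! f hfD hfR using hmeet
  refine Set.ncard_le_ncard_of_injOn f hfD (fun p hp q hq hpq => ?_) hD
  exact hR.elim_set hp hq (f p) (hfR p hp) (hpq ▸ hfR q hq)

theorem IsIndexedPartition.inter_preimage {α β : Type*} {n : ℕ} {P : Fin n → Set β}
    (hP : IsIndexedPartition Set.univ P) (X : Set α) (f : α → β) :
    IsIndexedPartition X fun i => X ∩ f ⁻¹' P i := by
  obtain ⟨-, hcover, hdisj⟩ := hP
  refine ⟨fun i => Set.inter_subset_left, ?_, fun i j hij => ?_⟩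
  · rw [← Set.inter_iUnion, ← Set.preimage_iUnion, hcover, Set.preimage_univ, Set.inter_univ]
  · exact ((hdisj i j hij).preimage f).mono Set.inter_subset_right Set.inter_subset_right

namespace SpGEMMDag

variable {SA SB : Set (ℕ × ℕ)} (G : SpGEMMDag SA SB)

/-- The closed out-neighborhood of a vertex: the vertex itself and its out-neighbors. For an input
it is the region of the DAG that stands for the corresponding net. -/
def closedOutNbhd (a : G.V) : Set G.V :=
  insert a {v | G.E a v}

/-- The DAG vertex representing a fine-grained vertex. The choice of the root of `T_{ij}` for
`v^C_{ij}` is arbitrary: any vertex of that tree would do. -/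
def ofFGVertex : FGVertex → G.V
  | .mult i k j => G.vm (i, k, j)
  | .nzA i k => G.vA (i, k)
  | .nzB k j => G.vB (k, j)
  | .nzC i j => G.root (i, j)

/-- The set of fine-grained vertices represented by an element of `U`: the part of the hypergraph
partition that corresponds to a part `U` of the DAG. -/
def fgPart (U : Set G.V) : Set FGVertex :=
  FGV SA SB ∩ G.ofFGVertex ⁻¹' U

theorem exists_mem_tree_of_edge {u v : G.V} (he : G.E u v) : ∃ p ∈ SC SA SB, v ∈ G.tree p := by
  rcases (G.edge_iff u v).1 he with ⟨t, ht, -, rfl⟩ | ⟨p, hp⟩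
  · exact ⟨(t.1, t.2.2), ⟨t.2.1, ht⟩, G.vm_mem_tree t ht⟩
  · obtain ⟨hpC, -, hv⟩ := G.treeE_mem p u v hp
    exact ⟨p, hpC, hv⟩

theorem isInput_vA {p : ℕ × ℕ} (hp : p ∈ SA) : G.IsInput (G.vA p) := fun _ he =>
  let ⟨q, hq, hmem⟩ := G.exists_mem_tree_of_edge he
  G.vA_notin_tree p hp q hq hmem

theorem isInput_vB {p : ℕ × ℕ} (hp : p ∈ SB) : G.IsInput (G.vB p) := fun _ he =>
  let ⟨q, hq, hmem⟩ := G.exists_mem_tree_of_edge he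
  G.vB_notin_tree p hp q hq hmem

theorem edge_vA_vm {t : ℕ × ℕ × ℕ} (ht : t ∈ Vm SA SB) : G.E (G.vA (t.1, t.2.1)) (G.vm t) :=
  (G.edge_iff _ _).2 (.inl ⟨t, ht, .inl rfl, rfl⟩)

theorem edge_vB_vm {t : ℕ × ℕ × ℕ} (ht : t ∈ Vm SA SB) : G.E (G.vB (t.2.1, t.2.2)) (G.vm t) :=
  (G.edge_iff _ _).2 (.inl ⟨t, ht, .inr rfl, rfl⟩)

theorem exists_eq_vm_of_edge_vA {p : ℕ × ℕ} (hp : p ∈ SA) {v : G.V} (he : G.E (G.vA p) v) :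
    ∃ t ∈ Vm SA SB, p = (t.1, t.2.1) ∧ v = G.vm t := by
  rcases (G.edge_iff _ _).1 he with ⟨t, ht, h | h, hv⟩ | ⟨q, hq⟩
  · exact ⟨t, ht, G.vA_inj hp ht.1 h, hv⟩
  · exact absurd h (G.vA_ne_vB p hp _ ht.2)
  · obtain ⟨hqC, hmem, -⟩ := G.treeE_mem q _ _ hq
    exact absurd hmem (G.vA_notin_tree p hp q hqC)

theorem exists_eq_vm_of_edge_vB {p : ℕ × ℕ} (hp : p ∈ SB) {v : G.V} (he : G.E (G.vB p) v) :
    ∃ t ∈ Vm SA SB, p = (t.2.1, t.2.2) ∧ v = G.vm t := by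
  rcases (G.edge_iff _ _).1 he with ⟨t, ht, h | h, hv⟩ | ⟨q, hq⟩
  · exact absurd h.symm (G.vA_ne_vB _ ht.1 p hp)
  · exact ⟨t, ht, G.vB_inj hp ht.2 h, hv⟩
  · obtain ⟨hqC, hmem, -⟩ := G.treeE_mem q _ _ hq
    exact absurd hmem (G.vB_notin_tree p hp q hqC)

variable {G} in
theorem IsInput.disjoint_closedOutNbhd {a b : G.V} (ha : G.IsInput a) (hb : G.IsInput b)
    (hne : a ≠ b) (hcommon : ∀ v, G.E a v → ¬ G.E b v) :
    Disjoint (G.closedOutNbhd a) (G.closedOutNbhd b) := by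
  refine Set.disjoint_left.2 ?_
  rintro v (rfl | hav) (rfl | hbv)
  · exact hne rfl
  · exact ha _ hbv
  · exact hb _ hav
  · exact hcommon v hav hbv

theorem pairwiseDisjoint_closedOutNbhd_vA :
    SA.PairwiseDisjoint fun p => G.closedOutNbhd (G.vA p) := by
  refine fun p hp q hq hpq => (G.isInput_vA hp).disjoint_closedOutNbhd (G.isInput_vA hq)
    (G.vA_inj.ne hp hq hpq) fun v hpv hqv => hpq ?_
  obtain ⟨t, ht, rfl, rfl⟩ := G.exists_eq_vm_of_edge_vA hp hpv
  obtain ⟨t', ht', rfl, htt'⟩ := G.exists_eq_vm_of_edge_vA hq hqv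
  rw [G.vm_inj ht ht' htt']

theorem pairwiseDisjoint_closedOutNbhd_vB :
    SB.PairwiseDisjoint fun p => G.closedOutNbhd (G.vB p) := by
  refine fun p hp q hq hpq => (G.isInput_vB hp).disjoint_closedOutNbhd (G.isInput_vB hq)
    (G.vB_inj.ne hp hq hpq) fun v hpv hqv => hpq ?_
  obtain ⟨t, ht, rfl, rfl⟩ := G.exists_eq_vm_of_edge_vB hp hpv
  obtain ⟨t', ht', rfl, htt'⟩ := G.exists_eq_vm_of_edge_vB hq hqv
  rw [G.vm_inj ht ht' htt']

theorem mapsTo_netA {p : ℕ × ℕ} (hp : p ∈ SA) :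
    Set.MapsTo G.ofFGVertex (netA SB p.1 p.2) (G.closedOutNbhd (G.vA p)) := by
  rintro x (⟨j, hj, rfl⟩ | rfl)
  · exact .inr (G.edge_vA_vm (t := (p.1, p.2, j)) ⟨hp, hj⟩)
  · exact .inl rfl

theorem mapsTo_netB {p : ℕ × ℕ} (hp : p ∈ SB) :
    Set.MapsTo G.ofFGVertex (netB SA p.1 p.2) (G.closedOutNbhd (G.vB p)) := by
  rintro x (⟨i, hi, rfl⟩ | rfl)
  · exact .inr (G.edge_vB_vm (t := (i, p.1, p.2)) ⟨hi, hp⟩)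
  · exact .inl rfl

theorem mapsTo_netC {p : ℕ × ℕ} (hp : p ∈ SC SA SB) :
    Set.MapsTo G.ofFGVertex (netC SA SB p.1 p.2) (G.tree p) := by
  rintro x (⟨k, hA, hB, rfl⟩ | rfl)
  · exact G.vm_mem_tree (p.1, k, p.2) ⟨hA, hB⟩
  · exact G.root_mem p hp

theorem mem_tree_of_edge {p : ℕ × ℕ} (hp : p ∈ SC SA SB) {u v : G.V} (hu : u ∈ G.tree p)
    (he : G.E u v) : v ∈ G.tree p := by
  rcases (G.edge_iff u v).1 he with ⟨t, ht, rfl | rfl, -⟩ | ⟨q, hq⟩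
  · exact absurd hu (G.vA_notin_tree _ ht.1 p hp)
  · exact absurd hu (G.vB_notin_tree _ ht.2 p hp)
  · obtain ⟨hqC, huq, hv⟩ := G.treeE_mem q u v hq
    obtain rfl : p = q := by
      by_contra hpq
      exact Set.disjoint_left.1 (G.trees_disjoint p hp q hqC hpq) hu huq
    exact hv

theorem wellFounded_flip_edge : WellFounded (flip G.E) := by
  have := G.finV
  have : Std.Irrefl (Relation.TransGen (flip G.E)) :=
    ⟨fun v hv => G.acyclic v (Relation.transGen_swap.1 hv)⟩
  exact Subrelation.wf Relation.TransGen.single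
    (Finite.wellFounded_of_trans_of_irrefl (Relation.TransGen (flip G.E)))

variable {G}

theorem inter_nonempty_of_mapsTo {N : Set FGVertex} {R U : Set G.V}
    (hN : Set.MapsTo G.ofFGVertex N R) (hmeet : (N ∩ G.fgPart U).Nonempty) : (U ∩ R).Nonempty :=
  let ⟨x, hxN, _, hxU⟩ := hmeet
  ⟨G.ofFGVertex x, hxU, hN hxN⟩

theorem IsDominator.inter_closedOutNbhd_nonempty {U D : Set G.V} (hD : G.IsDominator U D) {a : G.V}
    (ha : G.IsInput a) (hmeet : (U ∩ G.closedOutNbhd a).Nonempty) :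
    (D ∩ G.closedOutNbhd a).Nonempty := by
  obtain ⟨v, hvU, rfl | hav⟩ := hmeet
  · obtain ⟨d, hd, hmem⟩ := hD v [] (List.isChain_singleton v) ha hvU
    exact ⟨d, hd, .inl (List.mem_singleton.1 hmem)⟩
  · obtain ⟨d, hd, hmem⟩ := hD a [v] (List.isChain_pair.2 hav) ha hvU
    rcases List.mem_pair.1 hmem with rfl | rfl
    exacts [⟨d, hd, .inl rfl⟩, ⟨d, hd, .inr hav⟩]

theorem minSet_nonempty {U : Set G.V} (hU : U.Nonempty) : (G.minSet U).Nonempty :=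
  let ⟨u, huU, hmin⟩ := G.wellFounded_flip_edge.has_min U hU
  ⟨u, huU, fun v he hv => hmin v hv he⟩

theorem minSet_inter_subset {U T : Set G.V} (hT : ∀ u ∈ T, ∀ v, G.E u v → v ∈ T) :
    G.minSet (U ∩ T) ⊆ G.minSet U ∩ T := fun u ⟨⟨huU, huT⟩, hmin⟩ =>
  ⟨⟨huU, fun v he hv => hmin v he ⟨hv, hT u huT v he⟩⟩, huT⟩

theorem IsDominator.ncard_WA_fgPart_le {U D : Set G.V} (hD : G.IsDominator U D) :
    (WA SA SB (G.fgPart U)).ncard ≤ D.ncard := by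
  have := G.finV
  exact ncard_le_ncard_of_pairwiseDisjoint D.toFinite
    (G.pairwiseDisjoint_closedOutNbhd_vA.subset fun _ hp => hp.1) fun _ ⟨hp, hmeet⟩ =>
      hD.inter_closedOutNbhd_nonempty (G.isInput_vA hp)
        (inter_nonempty_of_mapsTo (G.mapsTo_netA hp) hmeet)

theorem IsDominator.ncard_WB_fgPart_le {U D : Set G.V} (hD : G.IsDominator U D) :
    (WB SA SB (G.fgPart U)).ncard ≤ D.ncard := by
  have := G.finV
  exact ncard_le_ncard_of_pairwiseDisjoint D.toFinite
    (G.pairwiseDisjoint_closedOutNbhd_vB.subset fun _ hp => hp.1) fun _ ⟨hp, hmeet⟩ =>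
      hD.inter_closedOutNbhd_nonempty (G.isInput_vB hp)
        (inter_nonempty_of_mapsTo (G.mapsTo_netB hp) hmeet)

theorem ncard_WC_fgPart_le (U : Set G.V) :
    (WC SA SB (G.fgPart U)).ncard ≤ (G.minSet U).ncard := by
  have := G.finV
  exact ncard_le_ncard_of_pairwiseDisjoint (G.minSet U).toFinite
    (fun p hp q hq => G.trees_disjoint p hp.1 q hq.1) fun _ ⟨hp, hmeet⟩ =>
      (minSet_nonempty (inter_nonempty_of_mapsTo (G.mapsTo_netC hp) hmeet)).mono
        (minSet_inter_subset fun _ hu _ => G.mem_tree_of_edge hp hu)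

end SpGEMMDag

theorem spartition_to_hypergraph_partition_general
    {SA SB : Set (ℕ × ℕ)} (G : SpGEMMDag SA SB) {S M h : ℕ} {P : Fin h → Set G.V}
    (hP : IsIndexedPartition Set.univ P)
    (hdom : ∀ i, ∃ D : Set G.V, G.IsDominator (P i) D ∧ D.ncard ≤ S)
    (hmin : ∀ i, (G.minSet (P i)).ncard ≤ M) :
    ∃ Q : Fin h → Set FGVertex, IsIndexedPartition (FGV SA SB) Q ∧
      ∀ i, (WA SA SB (Q i)).ncard ≤ S ∧ (WB SA SB (Q i)).ncard ≤ S ∧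
        (WC SA SB (Q i)).ncard ≤ M := by
  refine ⟨fun i => G.fgPart (P i), hP.inter_preimage (FGV SA SB) G.ofFGVertex, fun i => ?_⟩
  obtain ⟨D, hD, hcard⟩ := hdom i
  exact ⟨hD.ncard_WA_fgPart_le.trans hcard, hD.ncard_WB_fgPart_le.trans hcard,
    (SpGEMMDag.ncard_WC_fgPart_le (P i)).trans (hmin i)⟩

/-- Any `S`-partition `{V_1,…,V_h}` of a member of `𝒢(A,B)`
yields a partition `{𝒱_1,…,𝒱_h}` of the fine-grained vertex set `𝒱` with
`|W^A(𝒱_i)| ≤ S`, `|W^B(𝒱_i)| ≤ S`, and `|W^C(𝒱_i)| ≤ S` for each `i`. -/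
theorem spartition_to_hypergraph_partition
    (SA SB : Set (ℕ × ℕ)) (G : SpGEMMDag SA SB)
    (S : ℕ) (hS : 1 ≤ S) (h : ℕ) (P : Fin h → Set G.V)
    (hP : G.IsSPartition S P) :
    ∃ Q : Fin h → Set FGVertex, IsIndexedPartition (FGV SA SB) Q ∧
      ∀ i, (WA SA SB (Q i)).ncard ≤ S ∧ (WB SA SB (Q i)).ncard ≤ S ∧
        (WC SA SB (Q i)).ncard ≤ S := by
  obtain ⟨⟨hcover, -, hdisj⟩, hdom, hmin, -⟩ := hP
  exact spartition_to_hypergraph_partition_general G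
    ⟨fun _ => Set.subset_univ _, hcover, hdisj⟩ hdom hmin
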